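/- arXiv:1707.02278 — 3 statements merged into one kernel-verified Lean document; each statement's English description precedes it below -/
import Mathlib

section
/- Let f : ℝ^N → (−∞,∞] be proper, closed and convex, and let h : ℝ^N → ℝ be convex and differentiable. Let x̄ ∈ ℝ^N and suppose x̂ is a global minimizer of the function u ↦ f(u) + D_h(u, x̄). Then for every x ∈ dom f the three point inequality holds: f(x) + D_h(x, x̄) ≥ f(x̂) + D_h(x̂, x̄) + D_h(x, x̂). -/
open scoped RealInnerProductSpace
open Filter Topology

/-- The Bregman distance `D_h(x, u) = h x − h u − ⟨∇h u, x − u⟩` associated with `h`. -/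
noncomputable def breg {N : ℕ} (h : EuclideanSpace ℝ (Fin N) → ℝ)
    (x u : EuclideanSpace ℝ (Fin N)) : ℝ :=
  h x - h u - ⟪gradient h u, x - u⟫

/-- Convexity for extended-real-valued functions. -/
def ERealConvex {N : ℕ} (f : EuclideanSpace ℝ (Fin N) → EReal) : Prop :=
  ∀ x y : EuclideanSpace ℝ (Fin N), ∀ a b : ℝ, 0 ≤ a → 0 ≤ b → a + b = 1 →
    f (a • x + b • y) ≤ (a : EReal) * f x + (b : EReal) * f y

/-!
Write `D_h^φ(x, u) = h x - h u - φ (x - u)`. If `y` minimizes `f + D_h^φ(·, u)`, comparing `y` with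
the points `y + t (x - y)` of a segment and letting `t → 0⁺` shows that minus the Gateaux derivative
of `D_h^φ(·, u)` at `y`, which is `φ - ψ` for `ψ = h'(y)`, is a subgradient of `f` at `y`:
`f y ≤ f x + (ψ - φ) (x - y)`. By the three point identity the last term is exactly
`D_h^φ(x, u) - D_h^φ(y, u) - D_h^ψ(x, y)`.
-/

theorem ERealConvex.convex_epigraph {N : ℕ} {f : EuclideanSpace ℝ (Fin N) → EReal}
    (hf : ERealConvex f) : Convex ℝ {p : EuclideanSpace ℝ (Fin N) × ℝ | f p.1 ≤ p.2} := by
  rintro ⟨x, r⟩ hx ⟨y, s⟩ hy a b ha hb hab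
  calc f (a • x + b • y) ≤ a * f x + b * f y := hf x y a b ha hb hab
    _ ≤ a * r + b * s :=
      add_le_add (mul_le_mul_of_nonneg_left hx (EReal.coe_nonneg.2 ha))
        (mul_le_mul_of_nonneg_left hy (EReal.coe_nonneg.2 hb))
    _ = ((a • r + b • s : ℝ) : EReal) := by simp

/-- The Bregman distance `D_h^φ(x, u)` of `h` with slope `φ` at the base point `u`. The slope is an
argument, so that it can be a Gateaux derivative or a subgradient of `h` at `u`, and so that no
junk value enters where `h` is not differentiable. -/
def bregmanDist {E : Type*} [AddCommGroup E] [Module ℝ E] (h : E → ℝ) (φ : E →ₗ[ℝ] ℝ)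
    (x u : E) : ℝ :=
  h x - h u - φ (x - u)

theorem breg_eq_bregmanDist {N : ℕ} (h : EuclideanSpace ℝ (Fin N) → ℝ)
    (x u : EuclideanSpace ℝ (Fin N)) :
    breg h x u = bregmanDist h (innerₗ _ (gradient h u)) x u :=
  rfl

theorem hasLineDerivAt_innerₗ_gradient {F : Type*} [NormedAddCommGroup F] [InnerProductSpace ℝ F]
    [CompleteSpace F] {h : F → ℝ} {y : F} (hh : DifferentiableAt ℝ h y) (v : F) :
    HasLineDerivAt ℝ h (innerₗ F (gradient h y) v) y v :=
  hh.hasGradientAt.hasFDerivAt.hasLineDerivAt v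

section

variable {E : Type*} [AddCommGroup E] [Module ℝ E] {f : E → EReal} {g h : E → ℝ}
  {φ ψ : E →ₗ[ℝ] ℝ} {u v x y : E} {a c d r t : ℝ}

theorem bregmanDist_three_point (h : E → ℝ) (φ ψ : E →ₗ[ℝ] ℝ) (x y u : E) :
    bregmanDist h φ x u =
      bregmanDist h φ y u + bregmanDist h ψ x y + (ψ (x - y) - φ (x - y)) := by
  simp only [bregmanDist, map_sub]
  ring

theorem hasLineDerivAt_bregmanDist (hh : HasLineDerivAt ℝ h d y v) :
    HasLineDerivAt ℝ (bregmanDist h φ · u) (d - φ v) y v := by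
  have hφ : HasDerivAt (fun t : ℝ ↦ φ (y + t • v - u)) (φ v) 0 := by
    simpa using ((hasDerivAt_id (0 : ℝ)).mul_const (φ v)).const_add (φ y) |>.sub_const (φ u)
  exact (HasDerivAt.sub_const (h u) hh).sub hφ

theorem le_lineDeriv_of_eventually_add_mul_le (hg : HasLineDerivAt ℝ g d y v)
    (hle : ∀ᶠ t : ℝ in 𝓝[>] 0, g y + t * c ≤ g (y + t • v)) : c ≤ d := by
  refine ge_of_tendsto hg.tendsto_slope_zero_right ?_
  filter_upwards [hle, self_mem_nhdsWithin] with t hle ht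
  rw [smul_eq_mul, le_inv_mul_iff₀ ht]
  linarith

theorem le_segment_of_convex_epigraph (hf : Convex ℝ {p : E × ℝ | f p.1 ≤ p.2})
    (hy : f y ≤ a) (hx : f x ≤ r) (ht : t ∈ Set.Icc (0 : ℝ) 1) :
    f (y + t • (x - y)) ≤ ((a + t * (r - a) : ℝ) : EReal) :=
  hf.add_smul_sub_mem (x := (y, a)) (y := (x, r)) hy hx ht

theorem le_add_lineDeriv_of_forall_add_le (hf : Convex ℝ {p : E × ℝ | f p.1 ≤ p.2})
    (hg : HasLineDerivAt ℝ g d y (x - y)) (hmin : ∀ z, f y + g y ≤ f z + g z) :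
    f y ≤ f x + d := by
  have real_case {a r : ℝ} (hy : f y = a) (hx : f x = r) : a ≤ r + d := by
    suffices a - r ≤ d by linarith
    refine le_lineDeriv_of_eventually_add_mul_le hg ?_
    filter_upwards [Ioo_mem_nhdsGT (zero_lt_one' ℝ)] with t ht
    have hseg : (a : EReal) + g y ≤
        ((a + t * (r - a) : ℝ) : EReal) + g (y + t • (x - y)) :=
      calc (a : EReal) + g y ≤ f (y + t • (x - y)) + g (y + t • (x - y)) := hy ▸ hmin _
        _ ≤ _ := by
          gcongr
          exact le_segment_of_convex_epigraph hf hy.le hx.le (Set.Ioo_subset_Icc_self ht)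
    norm_cast at hseg
    linarith
  have hxy := hmin x
  cases hy : f y <;> cases hx : f x
  case coe.coe => exact_mod_cast real_case hy hx
  all_goals simp_all [← EReal.coe_add]

theorem bregman_three_point_inequality_general (hf : Convex ℝ {p : E × ℝ | f p.1 ≤ p.2})
    (hh : ∀ v, HasLineDerivAt ℝ h (ψ v) y v)
    (hmin : ∀ z, f y + (bregmanDist h φ y u : EReal) ≤ f z + (bregmanDist h φ z u : EReal))
    (x : E) :
    f y + (bregmanDist h φ y u : EReal) + (bregmanDist h ψ x y : EReal) ≤
      f x + (bregmanDist h φ x u : EReal) := by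
  have hsub : f y ≤ f x + ((ψ (x - y) - φ (x - y) : ℝ) : EReal) :=
    le_add_lineDeriv_of_forall_add_le hf (hasLineDerivAt_bregmanDist (hh _)) hmin
  calc f y + (bregmanDist h φ y u : EReal) + (bregmanDist h ψ x y : EReal)
      ≤ f x + ((ψ (x - y) - φ (x - y) : ℝ) : EReal) + (bregmanDist h φ y u : EReal) +
          (bregmanDist h ψ x y : EReal) := by gcongr
    _ = f x + (bregmanDist h φ x u : EReal) := by
      rw [bregmanDist_three_point h φ ψ x y u]
      push_cast
      ac_rfl

end

/-- **Three point inequality.** If `f` is proper closed convex, `h` is convex differentiable,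
and `x̂` globally minimizes `u ↦ f u + D_h(u, x̄)`, then for every `x ∈ dom f`:
`f x + D_h(x, x̄) ≥ f x̂ + D_h(x̂, x̄) + D_h(x, x̂)`. -/
theorem bregman_three_point_inequality (N : ℕ)
    (f : EuclideanSpace ℝ (Fin N) → EReal)
    (hfbot : ∀ z, f z ≠ ⊥) (hfproper : ∃ z, f z ≠ ⊤)
    (hfclosed : LowerSemicontinuous f) (hfconv : ERealConvex f)
    (h : EuclideanSpace ℝ (Fin N) → ℝ)
    (hhconv : ConvexOn ℝ Set.univ h) (hhdiff : Differentiable ℝ h)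
    (xb xh : EuclideanSpace ℝ (Fin N))
    (hmin : ∀ u, f xh + ((breg h xh xb : ℝ) : EReal) ≤ f u + ((breg h u xb : ℝ) : EReal)) :
    ∀ x, f x ≠ ⊤ →
      f xh + ((breg h xh xb : ℝ) : EReal) + ((breg h x xh : ℝ) : EReal) ≤
        f x + ((breg h x xb : ℝ) : EReal) := by
  simp only [breg_eq_bregmanDist] at hmin ⊢
  exact fun x _ ↦ bregman_three_point_inequality_general hfconv.convex_epigraph
    (hasLineDerivAt_innerₗ_gradient (hhdiff xh)) hmin x
end

section
/- Let f : ℝ^N → (−∞,∞] be proper, x̄ ∈ dom f, and let m : ℝ^N → (−∞,∞] be a proper, closed, convex model function satisfying |f(x) − m(x)| ≤ ω(‖x − x̄‖) for all x ∈ ℝ^N, where ω is a growth function. Let h : ℝ^N → ℝ be convex and differentiable, so that D_h ≥ 0. Fix δ, γ ∈ (0,1) and η̃ > 0, and suppose ŷ ∈ ℝ^N satisfies Δ := m(ŷ) + D_h(ŷ, x̄) − f(x̄) < 0. Then there exists j ∈ ℕ such that, with η_j := η̃·δ^j, the Armijo-type descent condition f(x̄ + η_j(ŷ − x̄)) ≤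 f(x̄) + γ·η_j·Δ holds. -/
open scoped RealInnerProductSpace
open Filter Topology

/-!
Since `D_h ≥ 0`, we have `m ŷ ≤ f x̄ + Δ`; also `m x̄ ≤ f x̄`, so convexity of `m` along the segment
gives `m (x̄ + η (ŷ - x̄)) ≤ f x̄ + η Δ` for `η ∈ [0, 1]`. Passing from `m` to `f` costs
`ω (η ‖ŷ - x̄‖) = o(η)`, which the gap `(1 - γ) η (-Δ)` between the predicted decrease and the
decrease demanded by the Armijo condition absorbs once `η` is small.
-/

theorem add_fderivWithin_sub_le_of_convexOn {E : Type*} [NormedAddCommGroup E] [NormedSpace ℝ E]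
    {s : Set E} {h : E → ℝ} {h' : E →L[ℝ] ℝ} {u x : E} (hconv : ConvexOn ℝ s h)
    (hu : u ∈ s) (hx : x ∈ s) (hdiff : HasFDerivWithinAt h h' s u) :
    h u + h' (x - u) ≤ h x := by
  let line : ℝ →ᵃ[ℝ] E := AffineMap.lineMap u x
  have line_zero : line 0 = u := AffineMap.lineMap_apply_zero u x
  have line_one : line 1 = x := AffineMap.lineMap_apply_one u x
  have hderiv : HasDerivWithinAt (h ∘ line) (h' (x - u)) (line ⁻¹' s) 0 :=
    HasFDerivWithinAt.comp_hasDerivWithinAt 0 (line_zero.symm ▸ hdiff)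
      AffineMap.hasDerivWithinAt_lineMap (Set.mapsTo_preimage line s)
  have hslope : h' (x - u) ≤ slope (h ∘ line) 0 1 :=
    (hconv.comp_affineMap line).le_slope_of_hasDerivWithinAt
      (by simpa [line_zero] using hu) (by simpa [line_one] using hx) zero_lt_one hderiv
  simp only [slope_def_field, Function.comp_apply, line_zero, line_one, sub_zero, div_one] at hslope
  linarith

theorem breg_nonneg {N : ℕ} {h : EuclideanSpace ℝ (Fin N) → ℝ} {u : EuclideanSpace ℝ (Fin N)}
    (hconv : ConvexOn ℝ Set.univ h) (hdiff : DifferentiableAt ℝ h u)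
    (x : EuclideanSpace ℝ (Fin N)) : 0 ≤ breg h x u := by
  have := add_fderivWithin_sub_le_of_convexOn hconv (Set.mem_univ u) (Set.mem_univ x)
    hdiff.hasFDerivAt.hasFDerivWithinAt
  rw [breg, inner_gradient_left]
  linarith

theorem eventually_growth_mul_le {ω : ℝ → ℝ} (hω0 : ω 0 = 0)
    (hω : Tendsto (fun t => ω t / t) (𝓝[>] 0) (𝓝 0)) {d c : ℝ} (hd : 0 ≤ d) (hc : 0 < c) :
    ∀ᶠ η in 𝓝[>] (0 : ℝ), ω (η * d) ≤ c * η := by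
  rcases hd.eq_or_lt with rfl | hd
  · filter_upwards [self_mem_nhdsWithin] with η (hη : 0 < η)
    rw [mul_zero, hω0]
    positivity
  · have hsmall : ∀ᶠ t in 𝓝[>] (0 : ℝ), ω t / t ≤ c / d := hω.eventually_le_const (by positivity)
    filter_upwards [eventually_nhdsGT_zero_mul_left hd hsmall, self_mem_nhdsWithin]
      with η hle (hη : 0 < η)
    rw [mul_comm d η] at hle
    calc ω (η * d) ≤ c / d * (η * d) := (div_le_iff₀ (by positivity)).1 hle
      _ = c * η := by field_simp

theorem ereal_sub_le_coe_iff {a b : EReal} {r : ℝ} : a - b ≤ r ↔ a ≤ b + r := by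
  rw [EReal.sub_le_iff_le_add (.inr (EReal.coe_ne_top r)) (.inr (EReal.coe_ne_bot r)), add_comm]

theorem apply_add_smul_sub_le_of_convex {E : Type*} [AddCommGroup E] [Module ℝ E] {m : E → EReal}
    (hm : ∀ u v : E, ∀ a b : ℝ, 0 ≤ a → 0 ≤ b → a + b = 1 →
      m (a • u + b • v) ≤ (a : EReal) * m u + (b : EReal) * m v)
    {x y : E} {c : EReal} {Δ η : ℝ} (hx : m x ≤ c) (hy : m y ≤ c + Δ) (hη : η ∈ Set.Icc 0 1) :
    m (x + η • (y - x)) ≤ c + (η * Δ : ℝ) := by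
  have hη0 : (0 : EReal) ≤ η := EReal.coe_nonneg.2 hη.1
  have hη1 : (0 : EReal) ≤ (1 - η : ℝ) := EReal.coe_nonneg.2 (sub_nonneg.2 hη.2)
  calc m (x + η • (y - x)) = m ((1 - η) • x + η • y) := by congr 1; module
    _ ≤ (1 - η : ℝ) * m x + η * m y := hm x y _ _ (sub_nonneg.2 hη.2) hη.1 (sub_add_cancel 1 η)
    _ ≤ (1 - η : ℝ) * c + η * (c + Δ) := by gcongr
    _ = ((1 - η : ℝ) + η) * c + η * Δ := by
      rw [EReal.left_distrib_of_nonneg_of_ne_top hη0 (EReal.coe_ne_top η),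
        EReal.right_distrib_of_nonneg hη1 hη0, add_assoc]
    _ = c + (η * Δ : ℝ) := by
      rw [← EReal.coe_add, sub_add_cancel, EReal.coe_one, one_mul, EReal.coe_mul]

theorem line_search_finite_termination_general {E : Type*} [SeminormedAddCommGroup E]
    [NormedSpace ℝ E] {f m : E → EReal} {x y : E} {ω : ℝ → ℝ} {γ Δ : ℝ}
    (hm : ∀ u v : E, ∀ a b : ℝ, 0 ≤ a → 0 ≤ b → a + b = 1 →
      m (a • u + b • v) ≤ (a : EReal) * m u + (b : EReal) * m v)
    (hω0 : ω 0 = 0) (hω : Tendsto (fun t => ω t / t) (𝓝[>] 0) (𝓝 0))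
    (hmodel : ∀ z, f z - m z ≤ ω ‖z - x‖) (hmx : m x ≤ f x)
    (hdecrease : m y - f x ≤ Δ) (hΔ : Δ < 0) (hγ : γ < 1) :
    ∀ᶠ η in 𝓝[>] (0 : ℝ), f (x + η • (y - x)) ≤ f x + (γ * η * Δ : ℝ) := by
  have hgap : 0 < (1 - γ) * -Δ := mul_pos (sub_pos.2 hγ) (neg_pos.2 hΔ)
  filter_upwards [eventually_growth_mul_le hω0 hω (norm_nonneg (y - x)) hgap,
    Ioc_mem_nhdsGT zero_lt_one] with η hωη ⟨hη0, hη1⟩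
  have hnorm : ‖x + η • (y - x) - x‖ = η * ‖y - x‖ := by
    rw [add_sub_cancel_left, norm_smul, Real.norm_of_nonneg hη0.le]
  calc f (x + η • (y - x)) ≤ m (x + η • (y - x)) + ω (η * ‖y - x‖) :=
        ereal_sub_le_coe_iff.1 (hnorm ▸ hmodel (x + η • (y - x)))
    _ ≤ f x + (η * Δ : ℝ) + ω (η * ‖y - x‖) := by
      gcongr
      exact apply_add_smul_sub_le_of_convex hm hmx (ereal_sub_le_coe_iff.1 hdecrease) ⟨hη0.le, hη1⟩
    _ = f x + (η * Δ + ω (η * ‖y - x‖) : ℝ) := by rw [add_assoc, EReal.coe_add]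
    _ ≤ f x + (γ * η * Δ : ℝ) := by
      gcongr
      linarith

theorem tendsto_const_mul_pow_nhdsGT_zero {c r : ℝ} (hc : 0 < c) (hr0 : 0 < r) (hr1 : r < 1) :
    Tendsto (fun j : ℕ => c * r ^ j) atTop (𝓝[>] 0) := by
  simpa only [mul_zero] using
    TendstoNhdsWithinIoi.const_mul hc (tendsto_pow_atTop_nhdsWithin_zero_of_lt_one hr0 hr1)

/-- **Finite termination of the Armijo-like line search.** Given a proper `f`, a point
`x̄ ∈ dom f`, a proper closed convex model `m` with `|f − m| ≤ ω(‖· − x̄‖)` for a growth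
function `ω`, a convex differentiable `h`, parameters `δ, γ ∈ (0,1)`, `η̃ > 0`, and a point
`ŷ` with `Δ := m ŷ + D_h(ŷ, x̄) − f x̄ < 0`, there exists `j ∈ ℕ` such that, with
`η_j = η̃ δ^j`, one has `f(x̄ + η_j (ŷ − x̄)) ≤ f x̄ + γ η_j Δ`. -/
theorem line_search_finite_termination (N : ℕ)
    (f : EuclideanSpace ℝ (Fin N) → EReal)
    (hfbot : ∀ z, f z ≠ ⊥) (hfproper : ∃ z, f z ≠ ⊤)
    (xb : EuclideanSpace ℝ (Fin N)) (hxb : f xb ≠ ⊤)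
    (m : EuclideanSpace ℝ (Fin N) → EReal)
    (hmbot : ∀ z, m z ≠ ⊥) (hmproper : ∃ z, m z ≠ ⊤)
    (hmclosed : LowerSemicontinuous m) (hmconv : ERealConvex m)
    (ω : ℝ → ℝ) (hω0 : ω 0 = 0) (hωnn : ∀ t, 0 ≤ t → 0 ≤ ω t)
    (hωgrowth : Tendsto (fun t => ω t / t) (𝓝[>] (0:ℝ)) (𝓝 0))
    (hmodel : ∀ x, f x - m x ≤ ((ω ‖x - xb‖ : ℝ) : EReal) ∧
                   m x - f x ≤ ((ω ‖x - xb‖ : ℝ) : EReal))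
    (h : EuclideanSpace ℝ (Fin N) → ℝ)
    (hhconv : ConvexOn ℝ Set.univ h) (hhdiff : Differentiable ℝ h)
    (δ γ : ℝ) (hδ : δ ∈ Set.Ioo (0:ℝ) 1) (hγ : γ ∈ Set.Ioo (0:ℝ) 1)
    (ηt : ℝ) (hηt : 0 < ηt)
    (yh : EuclideanSpace ℝ (Fin N)) (Δ : ℝ)
    (hΔdef : ((Δ : ℝ) : EReal) = m yh + ((breg h yh xb : ℝ) : EReal) - f xb)
    (hΔneg : Δ < 0) :
    ∃ j : ℕ, f (xb + (ηt * δ ^ j) • (yh - xb)) ≤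
      f xb + ((γ * (ηt * δ ^ j) * Δ : ℝ) : EReal) := by
  have hmxb : m xb ≤ f xb := EReal.sub_nonpos.1 (by simpa [hω0] using (hmodel xb).2)
  have hdecrease : m yh - f xb ≤ Δ := hΔdef ▸ EReal.sub_le_sub
    (le_add_of_nonneg_right (EReal.coe_nonneg.2 (breg_nonneg hhconv (hhdiff xb) yh))) le_rfl
  exact ((tendsto_const_mul_pow_nhdsGT_zero hηt hδ.1 hδ.2).eventually
    (line_search_finite_termination_general hmconv hω0 hωgrowth (fun z => (hmodel z).1)
      hmxb hdecrease hΔneg hγ.2)).exists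
end

section
/- Let f : ℝ^N → (−∞,∞] be proper and closed, x̄ ∈ dom f, and let m : ℝ^N → (−∞,∞] satisfy |f(x) − m(x)| ≤ ω(‖x − x̄‖) for all x ∈ ℝ^N, where ω is a growth function. Then the slopes of m and f at x̄ coincide: |∇m|(x̄) = |∇f|(x̄). -/
open Filter Topology

/-- The slope `|∇f|(x̄) = limsup_{x → x̄, x ≠ x̄} [f(x̄) − f(x)]₊ / ‖x − x̄‖` of an
extended-real-valued function `f` at `x̄`. -/
noncomputable def slopeAt {N : ℕ} (f : EuclideanSpace ℝ (Fin N) → EReal)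
    (xb : EuclideanSpace ℝ (Fin N)) : EReal :=
  Filter.limsup (fun x => (((max (f xb - f x) 0).toReal / ‖x - xb‖ : ℝ) : EReal)) (𝓝[≠] xb)

/-!
The slope is monotone under one-sided control: if `g x₀ ≤ f x₀` and, for every `ε > 0`,
`f x - g x ≤ ε * dist x x₀` for `x` close to `x₀`, then the difference quotient of `g` exceeds that
of `f` by at most `ε` near `x₀`, so the slope of `g` is at most the slope of `f`. A growth function
provides this control in both directions, and `ω 0 = 0` forces `f x₀ = m x₀`.
-/

theorem limsup_coe_le_limsup_coe_of_forall_eventually_le_add {α : Type*} {l : Filter α}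
    {u v : α → ℝ} (h : ∀ ε > 0, ∀ᶠ x in l, u x ≤ v x + ε) :
    limsup (fun x => (u x : EReal)) l ≤ limsup (fun x => (v x : EReal)) l := by
  refine EReal.le_of_forall_lt_iff_le.1 fun z hz => ?_
  obtain ⟨y, hvy, hyz⟩ := EReal.lt_iff_exists_real_btwn.1 hz
  have hε : 0 < z - y := sub_pos.2 (EReal.coe_lt_coe_iff.1 hyz)
  refine limsup_le_of_le (h := ?_)
  filter_upwards [eventually_lt_of_limsup_lt hvy, h _ hε] with x hvx huv
  have hvx' : v x < y := EReal.coe_lt_coe_iff.1 hvx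
  exact EReal.coe_le_coe_iff.2 (by linarith)

theorem ereal_sub_le_sub_add_coe {a b c d : EReal} {r : ℝ} (hba : b ≤ a)
    (hcd : c - d ≤ r) : b - d ≤ a - c + r := by
  have hc_le : c ≤ r + d :=
    (EReal.sub_le_iff_le_add (.inr (EReal.coe_ne_top r)) (.inr (EReal.coe_ne_bot r))).1 hcd
  induction c with
  | bot =>
    rcases eq_or_ne a ⊥ with rfl | ha
    · simp [le_bot_iff.1 hba]
    · simp [EReal.sub_bot ha]
  | top =>
    obtain rfl : d = ⊤ := by induction d <;> simp_all
    exact (EReal.sub_top b).trans_le bot_le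
  | coe c =>
    refine EReal.sub_le_of_le_add ?_
    calc b ≤ a - c + c := hba.trans_eq EReal.sub_add_cancel.symm
      _ ≤ a - c + (r + d) := by gcongr
      _ = a - c + r + d := (add_assoc _ _ _).symm

theorem toReal_max_sub_zero_le_add {a b c d : EReal} {r : ℝ} (hr : 0 ≤ r) (hba : b ≤ a)
    (ha : a ≠ ⊤) (hc : c ≠ ⊥) (hcd : c - d ≤ r) :
    (max (b - d) 0).toReal ≤ (max (a - c) 0).toReal + r := by
  have hac_top : max (a - c) 0 ≠ ⊤ :=
    (max_lt (EReal.add_lt_top ha (EReal.neg_eq_top_iff.not.2 hc)) EReal.zero_lt_top).ne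
  have hne_bot (z : EReal) : max z 0 ≠ ⊥ := ne_bot_of_le_ne_bot EReal.zero_ne_bot (le_max_right z 0)
  have hle : max (b - d) 0 ≤ max (a - c) 0 + r :=
    max_le ((ereal_sub_le_sub_add_coe hba hcd).trans (by gcongr; exact le_max_left _ _))
      (add_nonneg (le_max_right _ _) (EReal.coe_nonneg.2 hr))
  calc (max (b - d) 0).toReal
      ≤ (max (a - c) 0 + r).toReal := EReal.toReal_le_toReal hle (hne_bot _)
        (EReal.add_ne_top hac_top (EReal.coe_ne_top r))
    _ = (max (a - c) 0).toReal + r := by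
      rw [EReal.toReal_add hac_top (hne_bot _) (EReal.coe_ne_top r) (EReal.coe_ne_bot r),
        EReal.toReal_coe]

section MetricSpace

variable {X : Type*} [MetricSpace X]

/-- The descending slope of an extended-real-valued function on a metric space, which is `slopeAt`
on a Euclidean space. As there, `EReal.toReal` makes the quotient `0` where `f x₀ - f x = ⊤`. -/
noncomputable def descendingSlope (f : X → EReal) (x₀ : X) : EReal :=
  limsup (fun x => (((max (f x₀ - f x) 0).toReal / dist x x₀ : ℝ) : EReal)) (𝓝[≠] x₀)

theorem slopeAt_eq_descendingSlope {N : ℕ} (f : EuclideanSpace ℝ (Fin N) → EReal)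
    (x₀ : EuclideanSpace ℝ (Fin N)) : slopeAt f x₀ = descendingSlope f x₀ := by
  simp only [slopeAt, descendingSlope, dist_eq_norm]

theorem descendingSlope_le_of_sub_le {f g : X → EReal} {x₀ : X} (hf : ∀ x, f x ≠ ⊥)
    (hx₀ : f x₀ ≠ ⊤) (hle : g x₀ ≤ f x₀)
    (h : ∀ ε > 0, ∀ᶠ x in 𝓝[≠] x₀, f x - g x ≤ ((ε * dist x x₀ : ℝ) : EReal)) :
    descendingSlope g x₀ ≤ descendingSlope f x₀ := by
  refine limsup_coe_le_limsup_coe_of_forall_eventually_le_add fun ε hε => ?_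
  filter_upwards [h ε hε, self_mem_nhdsWithin] with x hx hne
  have hdist : 0 < dist x x₀ := dist_pos.2 hne
  rw [div_add' _ _ _ hdist.ne']
  gcongr
  exact toReal_max_sub_zero_le_add (by positivity) hle hx₀ (hf x) hx

theorem eventually_comp_dist_le_mul_dist {ω : ℝ → ℝ}
    (hω : Tendsto (fun t => ω t / t) (𝓝[>] 0) (𝓝 0)) (x₀ : X) {ε : ℝ} (hε : 0 < ε) :
    ∀ᶠ x in 𝓝[≠] x₀, ω (dist x x₀) ≤ ε * dist x x₀ := by
  have hdist : Tendsto (fun x => dist x x₀) (𝓝[≠] x₀) (𝓝[>] 0) :=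
    tendsto_nhdsWithin_iff.2 ⟨(tendsto_iff_dist_tendsto_zero.1 tendsto_id).mono_left
      nhdsWithin_le_nhds, eventually_mem_nhdsWithin.mono fun _ => dist_pos.2⟩
  filter_upwards [(hω.comp hdist).eventually_le_const hε, self_mem_nhdsWithin] with x hx hne
  exact (div_le_iff₀ (dist_pos.2 hne)).1 hx

theorem slope_model_eq_slope_general {f m : X → EReal} {x₀ : X} (hf : ∀ x, f x ≠ ⊥)
    (hm : ∀ x, m x ≠ ⊥) (hx₀ : f x₀ ≠ ⊤) {ω : ℝ → ℝ} (hω0 : ω 0 = 0)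
    (hω : Tendsto (fun t => ω t / t) (𝓝[>] 0) (𝓝 0))
    (hmodel : ∀ᶠ x in 𝓝 x₀, f x - m x ≤ (ω (dist x x₀) : EReal) ∧
      m x - f x ≤ (ω (dist x x₀) : EReal)) :
    descendingSlope m x₀ = descendingSlope f x₀ := by
  have hfm₀ : f x₀ = m x₀ := by
    have h₀ := hmodel.self_of_nhds
    simp only [dist_self, hω0, EReal.coe_zero, EReal.sub_nonpos] at h₀
    exact le_antisymm h₀.1 h₀.2
  have hω_small : ∀ ε > 0, ∀ᶠ x in 𝓝[≠] x₀, (ω (dist x x₀) : EReal) ≤ (ε * dist x x₀ : ℝ) :=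
    fun ε hε => (eventually_comp_dist_le_mul_dist hω x₀ hε).mono fun _ => EReal.coe_le_coe
  have hmodel_punctured := hmodel.filter_mono (nhdsWithin_le_nhds (s := {x₀}ᶜ))
  apply le_antisymm
  · exact descendingSlope_le_of_sub_le hf hx₀ hfm₀.ge fun ε hε =>
      (hmodel_punctured.and (hω_small ε hε)).mono fun _ h => h.1.1.trans h.2
  · exact descendingSlope_le_of_sub_le hm (hfm₀ ▸ hx₀) hfm₀.le fun ε hε =>
      (hmodel_punctured.and (hω_small ε hε)).mono fun _ h => h.1.2.trans h.2

end MetricSpace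

/-- **Equality of slopes.** If `f` is proper and closed, `x̄ ∈ dom f`, and the model `m`
satisfies `|f − m| ≤ ω(‖· − x̄‖)` for a growth function `ω`, then `|∇m|(x̄) = |∇f|(x̄)`. -/
theorem slope_model_eq_slope (N : ℕ)
    (f : EuclideanSpace ℝ (Fin N) → EReal)
    (hfbot : ∀ z, f z ≠ ⊥) (hfproper : ∃ z, f z ≠ ⊤)
    (hfclosed : LowerSemicontinuous f)
    (xb : EuclideanSpace ℝ (Fin N)) (hxb : f xb ≠ ⊤)
    (m : EuclideanSpace ℝ (Fin N) → EReal) (hmbot : ∀ z, m z ≠ ⊥)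
    (ω : ℝ → ℝ) (hω0 : ω 0 = 0) (hωnn : ∀ t, 0 ≤ t → 0 ≤ ω t)
    (hωgrowth : Tendsto (fun t => ω t / t) (𝓝[>] (0:ℝ)) (𝓝 0))
    (hmodel : ∀ x, f x - m x ≤ ((ω ‖x - xb‖ : ℝ) : EReal) ∧
                   m x - f x ≤ ((ω ‖x - xb‖ : ℝ) : EReal)) :
    slopeAt m xb = slopeAt f xb := by
  simpa only [slopeAt_eq_descendingSlope] using slope_model_eq_slope_general hfbot hmbot hxb hω0
    hωgrowth (.of_forall fun x => by simpa only [dist_eq_norm] using hmodel x)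
end
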